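/- Let n ≥ 1, let K ∈ ℝ^{2n×2n} be such that Δ' := Δ − K·Δ·Kᵀ is invertible, and let α ∈ ℝ^{2n×2n} be symmetric with α ⪰ ±(i/2)Δ'. Then the following are equivalent: (a) there is no symmetric γ ∈ ℝ^{2n×2n} with γ ≠ α, α − γ positive semidefinite, and γ ⪰ ±(i/2)Δ'; (b) −(α·(Δ')⁻¹)² = (1/4)·I_{2n}. -/

import Mathlib

/-!
Write `D = Δ'`, `P = α + (i/2) D`, `Q = α - (i/2) D`, regarded as complex matrices, so that
`P, Q ⪰ 0` and `P + Q = 2α`. Invertibility of `D` makes `α` invertible: a kernel vector of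
`P + Q` is killed by both `P` and `Q`, hence by `D`.

*(b) ⇒ (a)*. Condition (b) gives `P D⁻¹ Q = Q D⁻¹ P = 0`. If `γ ⪯ α` is admissible, then
`P = (γ + (i/2) D) + (α - γ)` is a sum of two positive semidefinite matrices, so
`(α - γ) D⁻¹ Q = 0`; likewise `(α - γ) D⁻¹ P = 0`. Adding, `(α - γ) D⁻¹ α = 0`, and `γ = α`.

*(a) ⇒ (b)*. Put `γ = (α - D α⁻¹ D / 4) / 2`. Then `γ ± (i/2) D` equals `P α⁻¹ P / 2`, resp.
`Q α⁻¹ Q / 2`, so `γ` is admissible. Moreover `α - γ = P α⁻¹ Q / 2`, and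
`2 P α⁻¹ Q = Q α⁻¹ P α⁻¹ Q + P α⁻¹ Q α⁻¹ P` because `P α⁻¹ Q = Q α⁻¹ P`; hence `γ ⪯ α`.
Minimality forces `α = -D α⁻¹ D / 4`, which is a rearrangement of (b).
-/

open Matrix ComplexOrder

/-- The standard `2n × 2n` symplectic form: block-diagonal with `n` copies of `[[0,1],[-1,0]]`. -/
def symplJ (n : ℕ) : Matrix (Fin (2*n)) (Fin (2*n)) ℝ :=
  Matrix.of fun i j =>
    if (i : ℕ) + 1 = (j : ℕ) ∧ (i : ℕ) % 2 = 0 then 1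
    else if (j : ℕ) + 1 = (i : ℕ) ∧ (j : ℕ) % 2 = 0 then -1 else 0

/-- `Ω = Δ ⊕ Δ`, the `4n × 4n` symplectic form. -/
def symplOmega (n : ℕ) : Matrix (Fin (2*n) ⊕ Fin (2*n)) (Fin (2*n) ⊕ Fin (2*n)) ℝ :=
  Matrix.fromBlocks (symplJ n) 0 0 (symplJ n)

/-- View a real matrix as a complex matrix. -/
def toC {m : Type*} (M : Matrix m m ℝ) : Matrix m m ℂ := M.map Complex.ofReal

/-- `M ⪰ ± (i/2) J₀` : both `M - (i/2) J₀` and `M + (i/2) J₀` are positive semidefinite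
as complex matrices. -/
def GeI {m : Type*} [Fintype m] (M J₀ : Matrix m m ℝ) : Prop :=
  (toC M - (Complex.I / 2) • toC J₀).PosSemidef ∧
  (toC M + (Complex.I / 2) • toC J₀).PosSemidef

section ToC

variable {m : Type*}

lemma toC_add (A B : Matrix m m ℝ) : toC (A + B) = toC A + toC B := by
  ext i j; simp [toC]

lemma toC_sub (A B : Matrix m m ℝ) : toC (A - B) = toC A - toC B := by
  ext i j; simp [toC]

lemma toC_smul (r : ℝ) (A : Matrix m m ℝ) : toC (r • A) = (r : ℂ) • toC A := by
  ext i j; simp [toC]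

lemma toC_mul [Fintype m] (A B : Matrix m m ℝ) : toC (A * B) = toC A * toC B := by
  ext i j; simp [toC, Matrix.mul_apply]

lemma toC_one [DecidableEq m] : toC (1 : Matrix m m ℝ) = 1 := by
  ext i j; by_cases h : i = j <;> simp [toC, Matrix.one_apply, h]

lemma toC_zero : toC (0 : Matrix m m ℝ) = 0 := by
  ext i j; simp [toC]

lemma toC_injective : Function.Injective (toC : Matrix m m ℝ → Matrix m m ℂ) := by
  intro A B h
  ext i j
  have := congrFun (congrFun h i) j
  simpa [toC] using this

lemma toC_conjTranspose (A : Matrix m m ℝ) : toC Aᴴ = (toC A)ᴴ := by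
  ext i j; simp [toC]

lemma toC_posSemidef [Fintype m] [DecidableEq m] {X : Matrix m m ℝ} (h : X.PosSemidef) :
    (toC X).PosSemidef := by
  obtain ⟨B, rfl⟩ : ∃ B : Matrix m m ℝ, X = Bᴴ * B := by
    open scoped MatrixOrder in
    exact CStarAlgebra.nonneg_iff_eq_star_mul_self.mp (Matrix.nonneg_iff_posSemidef.mpr h)
  rw [toC_mul, toC_conjTranspose]
  exact Matrix.posSemidef_conjTranspose_mul_self _

lemma posSemidef_of_toC [Fintype m] {X : Matrix m m ℝ} (h : (toC X).PosSemidef) :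
    X.PosSemidef := by
  refine Matrix.PosSemidef.of_dotProduct_mulVec_nonneg ?_ fun x => ?_
  · apply toC_injective
    rw [toC_conjTranspose]
    exact h.1
  · have h2 := h.dotProduct_mulVec_nonneg (fun i => (x i : ℂ))
    have : star (fun i => (x i : ℂ)) ⬝ᵥ toC X *ᵥ (fun i => (x i : ℂ))
        = ((star x ⬝ᵥ X *ᵥ x : ℝ) : ℂ) := by
      simp [dotProduct, Matrix.mulVec, toC]
    rw [this] at h2
    exact_mod_cast h2

end ToC

section Kernel

variable {m : Type*} [Fintype m]

/-- The kernel of a sum of positive semidefinite matrices lies in the kernel of each summand. -/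
lemma posSemidef_add_ker {N R : Matrix m m ℂ} (hN : N.PosSemidef) (hR : R.PosSemidef)
    {w : m → ℂ} (h : (N + R) *ᵥ w = 0) : R *ᵥ w = 0 := by
  classical
  rw [← hR.dotProduct_mulVec_zero_iff]
  have h1 := hN.dotProduct_mulVec_nonneg w
  have h2 := hR.dotProduct_mulVec_nonneg w
  have h3 : star w ⬝ᵥ N *ᵥ w + star w ⬝ᵥ R *ᵥ w = 0 := by
    rw [← dotProduct_add, ← Matrix.add_mulVec, h, dotProduct_zero]
  refine le_antisymm ?_ h2
  rw [← h3]
  exact le_add_of_nonneg_left h1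

lemma posSemidef_add_mul {N R W : Matrix m m ℂ} (hN : N.PosSemidef) (hR : R.PosSemidef)
    (h : (N + R) * W = 0) : R * W = 0 := by
  ext i j
  have hw : (N + R) *ᵥ (fun k => W k j) = 0 := by
    ext k
    exact congrFun (congrFun h k) j
  exact congrFun (posSemidef_add_ker hN hR hw) i

end Kernel

section Main

variable {m : Type*} [Fintype m] [DecidableEq m]

lemma isUnit_of_geI {α D : Matrix m m ℝ} (hD : IsUnit D) (hα : GeI α D) : IsUnit α := by
  obtain ⟨hQ, hP⟩ := hα
  by_contra hcon
  have hdet : α.det = 0 := by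
    by_contra hne
    exact hcon ((Matrix.isUnit_iff_isUnit_det α).mpr (isUnit_iff_ne_zero.mpr hne))
  obtain ⟨v, hv0, hv⟩ := Matrix.exists_mulVec_eq_zero_iff.mpr hdet
  set w : m → ℂ := fun i => (v i : ℂ) with hw
  have cast_mulVec : ∀ M : Matrix m m ℝ, toC M *ᵥ w = fun i => ((M *ᵥ v) i : ℂ) := by
    intro M; ext i; simp [toC, Matrix.mulVec, dotProduct, hw]
  have hαw : toC α *ᵥ w = 0 := by
    rw [cast_mulVec, hv]; ext i; simp
  have hPw : (toC α + (Complex.I / 2) • toC D) *ᵥ w = 0 := by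
    refine posSemidef_add_ker hQ hP ?_
    have : toC α - (Complex.I / 2) • toC D + (toC α + (Complex.I / 2) • toC D)
        = toC α + toC α := by abel
    rw [this, Matrix.add_mulVec, hαw, add_zero]
  have hDw : toC D *ᵥ w = 0 := by
    rw [Matrix.add_mulVec, hαw, zero_add, Matrix.smul_mulVec] at hPw
    exact (smul_eq_zero.mp hPw).resolve_left (by simp)
  have hDv : D *ᵥ v = 0 := by
    rw [cast_mulVec] at hDw
    ext i
    have := congrFun hDw i
    simpa using this
  have hDdet : D.det = 0 := Matrix.exists_mulVec_eq_zero_iff.mp ⟨v, hv0, hDv⟩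
  exact ((Matrix.isUnit_iff_isUnit_det D).mp hD).ne_zero hDdet

/-- The minimality criterion with an arbitrary invertible matrix `D` in place of `Δ'`. -/
lemma minimal_iff_sq_eq {α D : Matrix m m ℝ} (hD : IsUnit D) (hαsym : α.IsSymm) (hα : GeI α D) :
    (¬ ∃ γ : Matrix m m ℝ, γ.IsSymm ∧ γ ≠ α ∧ (α - γ).PosSemidef ∧ GeI γ D) ↔
      -((α * D⁻¹) ^ 2) = (1/4 : ℝ) • (1 : Matrix m m ℝ) := by
  have hαu := isUnit_of_geI hD hα
  have hαdet := (Matrix.isUnit_iff_isUnit_det α).mp hαu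
  have hDdet := (Matrix.isUnit_iff_isUnit_det D).mp hD
  obtain ⟨hQ, hP⟩ := hα
  have hI : Complex.I / 2 * (Complex.I / 2) = -(1 / 4 : ℂ) := by
    rw [div_mul_div_comm, Complex.I_mul_I]; norm_num
  constructor
  · intro hmin
    have ha1 : toC α * toC α⁻¹ = 1 := by
      rw [← toC_mul, Matrix.mul_nonsing_inv _ hαdet, toC_one]
    have ha2 : toC α⁻¹ * toC α = 1 := by
      rw [← toC_mul, Matrix.nonsing_inv_mul _ hαdet, toC_one]
    have hApos : (toC α).PosSemidef := by
      have h2 := (hQ.add hP).smul (show (0 : ℂ) ≤ 1 / 2 by positivity)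
      convert h2 using 1
      module
    have hapos : (toC α⁻¹).PosSemidef := by
      have h2 := hApos.inv
      rwa [Matrix.inv_eq_right_inv ha1] at h2
    set X : Matrix m m ℝ := α + (1 / 4 : ℝ) • (D * α⁻¹ * D) with hX
    have hXC : toC X = toC α + (1 / 4 : ℂ) • (toC D * toC α⁻¹ * toC D) := by
      rw [hX, toC_add, toC_smul, toC_mul, toC_mul]; norm_num
    generalize hA : toC α = A at *
    generalize ha : toC α⁻¹ = a at *
    generalize hE : toC D = E at *
    generalize hc : Complex.I / 2 = c at *
    have ha2' : ∀ Y : Matrix m m ℂ, a * (A * Y) = Y := fun Y => by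
      rw [← mul_assoc, ha2, one_mul]
    have ha1' : ∀ Y : Matrix m m ℂ, A * (a * Y) = Y := fun Y => by
      rw [← mul_assoc, ha1, one_mul]
    have hPQ : (A + c • E) * a * (A - c • E) = toC X := by
      rw [hXC]
      simp only [add_mul, mul_sub, smul_mul_assoc, mul_smul_comm, mul_assoc, ha1', ha2,
        smul_smul, smul_add, smul_sub, hI, mul_one]
      module
    have hQP : (A - c • E) * a * (A + c • E) = toC X := by
      rw [hXC]
      simp only [sub_mul, mul_add, smul_mul_assoc, mul_smul_comm, mul_assoc, ha1', ha2,
        smul_smul, smul_add, smul_sub, hI, mul_one]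
      module
    -- With `P = A + c • E`, `Q = A - c • E` and `γ = α - X / 2`, the matrices `P a P` and `Q a Q`
    -- are `2 γ + i D` and `2 γ - i D`.
    have hPP : (A + c • E) * a * (A + c • E) = (2 : ℂ) • (A + c • E) - toC X := by
      rw [← hQP, ← sub_eq_zero]
      have : (2 : ℂ) • (A + c • E) = ((A + c • E) + (A - c • E)) * a * (A + c • E) := by
        rw [add_add_sub_cancel, ← two_smul ℂ A, smul_mul_assoc, ha1, smul_mul_assoc, one_mul]
      rw [this, add_mul (A + c • E), add_mul ((A + c • E) * a)]; abel
    have hQQ : (A - c • E) * a * (A - c • E) = (2 : ℂ) • (A - c • E) - toC X := by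
      rw [← hPQ, ← sub_eq_zero]
      have : (2 : ℂ) • (A - c • E) = ((A + c • E) + (A - c • E)) * a * (A - c • E) := by
        rw [add_add_sub_cancel, ← two_smul ℂ A, smul_mul_assoc, ha1, smul_mul_assoc, one_mul]
      rw [this, add_mul (A + c • E), add_mul ((A + c • E) * a)]; abel
    -- `2 P a Q = (P a Q) a (P + Q) = P a Q a P + Q a P a Q`.
    have hXX : toC X = (1 / 2 : ℂ) • ((A + c • E) * (a * (A - c • E) * a) * (A + c • E)
        + (A - c • E) * (a * (A + c • E) * a) * (A - c • E)) := by
      have e1 : (A + c • E) * (a * (A - c • E) * a) * (A + c • E)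
          = toC X * a * (A + c • E) := by rw [← hPQ]; simp only [mul_assoc]
      have e2 : (A - c • E) * (a * (A + c • E) * a) * (A - c • E)
          = toC X * a * (A - c • E) := by rw [← hQP]; simp only [mul_assoc]
      rw [e1, e2, ← mul_add, add_add_sub_cancel, mul_add, mul_assoc, ha2, mul_one]
      module
    have conj : ∀ {S Y : Matrix m m ℂ}, S.PosSemidef → Y.PosSemidef →
        (S * Y * S).PosSemidef := by
      intro S Y hS hY
      have h2 := hY.mul_mul_conjTranspose_same S
      rwa [hS.1.eq] at h2
    have hXpos : (toC X).PosSemidef := by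
      rw [hXX]
      exact ((conj hP (conj hapos hQ)).add (conj hQ (conj hapos hP))).smul
        (show (0 : ℂ) ≤ 1 / 2 by positivity)
    have hXreal := posSemidef_of_toC hXpos
    have hXzero : X = 0 := by
      by_contra hne
      refine hmin ⟨α - (1 / 2 : ℝ) • X, ?_, ?_, ?_, ?_, ?_⟩
      · exact hαsym.sub (Matrix.IsSymm.smul (by simpa using hXreal.1) _)
      · intro h
        rw [sub_eq_self] at h
        exact hne ((smul_eq_zero.mp h).resolve_left (by norm_num))
      · rw [sub_sub_cancel]
        exact hXreal.smul (by norm_num)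
      · have h2 := (conj hQ hapos).smul (show (0 : ℂ) ≤ 1 / 2 by positivity)
        rw [hQQ] at h2
        rw [toC_sub, toC_smul, hA, hE, hc]
        convert h2 using 1
        push_cast
        module
      · have h2 := (conj hP hapos).smul (show (0 : ℂ) ≤ 1 / 2 by positivity)
        rw [hPP] at h2
        rw [toC_sub, toC_smul, hA, hE, hc]
        convert h2 using 1
        push_cast
        module
    have hαeq : -α = (1 / 4 : ℝ) • (D * α⁻¹ * D) := by
      rw [hX] at hXzero
      exact (eq_neg_of_add_eq_zero_right hXzero).symm
    have : -((α * D⁻¹) ^ 2) = -α * D⁻¹ * (α * D⁻¹) := by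
      rw [pow_two]; simp only [neg_mul]
    rw [this, hαeq, smul_mul_assoc, smul_mul_assoc, Matrix.mul_nonsing_inv_cancel_right _ _ hDdet,
      ← mul_assoc, Matrix.nonsing_inv_mul_cancel_right _ _ hαdet, Matrix.mul_nonsing_inv _ hDdet]
  · rintro hb ⟨γ, -, hne, hle, hγQ, hγP⟩
    have hRpos := toC_posSemidef hle
    rw [toC_sub] at hRpos
    have hbC : toC α * toC D⁻¹ * toC α = -(1 / 4 : ℂ) • toC D := by
      have h2 : α * D⁻¹ * α = -(1 / 4 : ℝ) • D := by
        have h3 : (α * D⁻¹) ^ 2 * D = -((1 / 4 : ℝ) • (1 : Matrix m m ℝ)) * D := by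
          rw [← hb, neg_neg]
        rw [pow_two, ← mul_assoc, Matrix.nonsing_inv_mul_cancel_right _ _ hDdet] at h3
        rw [h3, neg_mul, smul_mul_assoc, one_mul, neg_smul]
      rw [← toC_mul, ← toC_mul, h2, toC_smul]; norm_num
    have hd1 : toC D * toC D⁻¹ = 1 := by
      rw [← toC_mul, Matrix.mul_nonsing_inv _ hDdet, toC_one]
    have hd2 : toC D⁻¹ * toC D = 1 := by
      rw [← toC_mul, Matrix.nonsing_inv_mul _ hDdet, toC_one]
    have hPQ : (toC α + (Complex.I / 2) • toC D) *
        (toC D⁻¹ * (toC α - (Complex.I / 2) • toC D)) = 0 := by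
      rw [← mul_assoc]
      simp only [add_mul, mul_sub, smul_mul_assoc, mul_smul_comm, hbC, hd1, one_mul, smul_smul,
        smul_add, smul_sub, hI]
      rw [mul_assoc, hd2, mul_one]
      module
    have hQP : (toC α - (Complex.I / 2) • toC D) *
        (toC D⁻¹ * (toC α + (Complex.I / 2) • toC D)) = 0 := by
      rw [← mul_assoc]
      simp only [sub_mul, mul_add, smul_mul_assoc, mul_smul_comm, hbC, hd1, one_mul, smul_smul,
        smul_add, smul_sub, hI]
      rw [mul_assoc, hd2, mul_one]
      module
    have k1 := posSemidef_add_mul hγP hRpos (W := toC D⁻¹ * (toC α - (Complex.I / 2) • toC D))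
      (by rw [← hPQ]; congr 1; abel)
    have k2 := posSemidef_add_mul hγQ hRpos (W := toC D⁻¹ * (toC α + (Complex.I / 2) • toC D))
      (by rw [← hQP]; congr 1; abel)
    have k3 : toC ((α - γ) * (D⁻¹ * α)) = 0 := by
      rw [toC_mul, toC_sub, toC_mul]
      have h2 : (2 : ℂ) • ((toC α - toC γ) * (toC D⁻¹ * toC α)) = 0 := by
        rw [← add_zero (0 : Matrix m m ℂ)]
        nth_rewrite 1 [← k1]
        rw [← k2, ← mul_add, ← mul_add, sub_add_add_cancel, two_smul, mul_add, mul_add]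
      exact (smul_eq_zero.mp h2).resolve_left (by norm_num)
    rw [← toC_zero] at k3
    have k4 := toC_injective k3
    have hu : IsUnit (D⁻¹ * α) := ((Matrix.isUnit_nonsing_inv_iff).mpr hD).mul hαu
    exact hne (sub_eq_zero.mp (hu.mul_left_eq_zero.mp k4)).symm

end Main

theorem stmt7 (n : ℕ) (hn : 1 ≤ n) (K α : Matrix (Fin (2*n)) (Fin (2*n)) ℝ)
    (hinv : IsUnit (symplJ n - K * symplJ n * Kᵀ))
    (hαsym : α.IsSymm)
    (hα : GeI α (symplJ n - K * symplJ n * Kᵀ)) :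
    (¬ ∃ γ : Matrix (Fin (2*n)) (Fin (2*n)) ℝ, γ.IsSymm ∧ γ ≠ α ∧
        (α - γ).PosSemidef ∧ GeI γ (symplJ n - K * symplJ n * Kᵀ)) ↔
      -((α * (symplJ n - K * symplJ n * Kᵀ)⁻¹) ^ 2)
        = (1/4 : ℝ) • (1 : Matrix (Fin (2*n)) (Fin (2*n)) ℝ) :=
  minimal_iff_sq_eq hinv hαsym hα
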